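/- Let (▷,σ) be a cocycle datum of associative type for a Hopf algebra H on an algebra B. Then for all b',c' ∈ B and h,g ∈ H: (S(g_{(3)})S(h_{(3)}))▷(σ⁻¹(h_{(4)}, g_{(4)})·((h_{(5)}g_{(5)})▷c')·(h_{(6)}▷b')) · σ⁻¹(S(g_{(1)})S(h_{(1)}), h_{(2)}g_{(2)}) = c'·σ⁻¹(S(g_{(3)}), g_{(4)})·(S(g_{(2)})▷(b'·σ⁻¹(S(h_{(2)}), h_{(3)})))·σ(S(g_{(1)}), S(h_{(1)})). (This is the key identity showing that φ : (B^e#H)^{σ̃} → B^e#_σH is an algebra isomorphism.) -/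

import Mathlib

/-!
The identity is an identity of operators in a representation of the cross product `B #_σ H`.

The convolution algebra `Hom(H, B)` carries an action `t` of `H` by right translation, and `B` acts
on it by `lam b`, multiplication by the orbit map `orb b : x ↦ x ▷ b`.  Let `m(h)` be multiplication
by `σ(·, h)`.  The cocycle axiom says that `j = m * t` satisfies
`j(h) j(g) = lam(σ(h₍₁₎, g₍₁₎)) j(h₍₂₎ g₍₂₎)`, so `lam` and `j` represent `B #_σ H` (`regRep`).
Because `▷` is an action, `t` is covariant for `▷`, and the twisted module axiom says that `m`
commutes with `h ↦ lam(h ▷ b)`.  Therefore the values of `n = j⁻¹ * t` commute with `lam`.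

In the convolution algebra of maps of `(h, g)`, the left-hand side is the value at `1` of
`n(hg) * t⁻¹(hg) * lam(σ⁻¹(h, g)) * lam((hg) ▷ c') * t(h)` applied to `orb b'` (`lhs_eq`).
Here `n(hg) * t⁻¹(hg) = j⁻¹(hg)`, the inverse cocycle relation turns
`j⁻¹(hg) * lam(σ⁻¹(h, g))` into `j⁻¹(g) j⁻¹(h)`, and covariance moves `t(h)` to the left; the
commutation of `n` and `lam` then gives `lam(c') j⁻¹(g) n(h)` (`CrossRep.chain`).  Evaluating this
on `orb b'` at `1` (`rhs_eq`), with the formula `j⁻¹(h) = lam(σ⁻¹(S h₍₂₎, h₍₃₎)) j(S h₍₁₎)`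
(`CrossRep.ji_eq`) for the argument `h`, gives the right-hand side.
-/

open scoped TensorProduct
open Coalgebra

noncomputable section

section SweedlerDefs

variable (k : Type*) [Field k]
variable (H : Type*) [Ring H] [Bialgebra k H]

/-- Left-nested triple comultiplication `h ↦ (h₍₁₎ ⊗ h₍₂₎) ⊗ h₍₃₎`. -/
def Δ3 : H →ₗ[k] (H ⊗[k] H) ⊗[k] H :=
  (LinearMap.rTensor H (Coalgebra.comul (R := k) (A := H))) ∘ₗ Coalgebra.comul

/-- Left-nested fourfold comultiplication. -/
def Δ4 : H →ₗ[k] ((H ⊗[k] H) ⊗[k] H) ⊗[k] H :=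
  (LinearMap.rTensor H (Δ3 k H)) ∘ₗ Coalgebra.comul

/-- Left-nested fivefold comultiplication. -/
def Δ5 : H →ₗ[k] (((H ⊗[k] H) ⊗[k] H) ⊗[k] H) ⊗[k] H :=
  (LinearMap.rTensor H (Δ4 k H)) ∘ₗ Coalgebra.comul

/-- Left-nested sixfold comultiplication. -/
def Δ6 : H →ₗ[k] ((((H ⊗[k] H) ⊗[k] H) ⊗[k] H) ⊗[k] H) ⊗[k] H :=
  (LinearMap.rTensor H (Δ5 k H)) ∘ₗ Coalgebra.comul

/-- `IsRep2 k H h h1 h2` says that `Δh = ∑ᵢ h1 i ⊗ h2 i`, i.e. the families `h1, h2`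
realise the Sweedler legs `h₍₁₎ ⊗ h₍₂₎`. -/
def IsRep2 {n : ℕ} (h : H) (h1 h2 : Fin n → H) : Prop :=
  Coalgebra.comul (R := k) h = ∑ i, h1 i ⊗ₜ[k] h2 i

/-- A representation of the Sweedler legs `h₍₁₎ ⊗ h₍₂₎ ⊗ h₍₃₎`. -/
def IsRep3 {n : ℕ} (h : H) (h1 h2 h3 : Fin n → H) : Prop :=
  Δ3 k H h = ∑ i, (h1 i ⊗ₜ[k] h2 i) ⊗ₜ[k] h3 i

/-- A representation of the Sweedler legs `h₍₁₎ ⊗ h₍₂₎ ⊗ h₍₃₎ ⊗ h₍₄₎`. -/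
def IsRep4 {n : ℕ} (h : H) (h1 h2 h3 h4 : Fin n → H) : Prop :=
  Δ4 k H h = ∑ i, ((h1 i ⊗ₜ[k] h2 i) ⊗ₜ[k] h3 i) ⊗ₜ[k] h4 i

/-- A representation of the Sweedler legs `h₍₁₎ ⊗ ⋯ ⊗ h₍₅₎`. -/
def IsRep5 {n : ℕ} (h : H) (h1 h2 h3 h4 h5 : Fin n → H) : Prop :=
  Δ5 k H h = ∑ i, (((h1 i ⊗ₜ[k] h2 i) ⊗ₜ[k] h3 i) ⊗ₜ[k] h4 i) ⊗ₜ[k] h5 i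

/-- A representation of the Sweedler legs `h₍₁₎ ⊗ ⋯ ⊗ h₍₆₎`. -/
def IsRep6 {n : ℕ} (h : H) (h1 h2 h3 h4 h5 h6 : Fin n → H) : Prop :=
  Δ6 k H h = ∑ i, ((((h1 i ⊗ₜ[k] h2 i) ⊗ₜ[k] h3 i) ⊗ₜ[k] h4 i) ⊗ₜ[k] h5 i) ⊗ₜ[k] h6 i

/-- A Drinfeld 2-cocycle `χ : H ⊗ H → k` with convolution inverse `χi`. -/
structure DrinfeldCocycle (χ χi : H →ₗ[k] H →ₗ[k] k) : Prop where
  conv_left : ∀ (h g : H) {n m : ℕ} (h1 h2 : Fin n → H) (g1 g2 : Fin m → H),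
    IsRep2 k H h h1 h2 → IsRep2 k H g g1 g2 →
    ∑ i, ∑ j, χ (h1 i) (g1 j) * χi (h2 i) (g2 j)
      = Coalgebra.counit (R := k) h * Coalgebra.counit (R := k) g
  conv_right : ∀ (h g : H) {n m : ℕ} (h1 h2 : Fin n → H) (g1 g2 : Fin m → H),
    IsRep2 k H h h1 h2 → IsRep2 k H g g1 g2 →
    ∑ i, ∑ j, χi (h1 i) (g1 j) * χ (h2 i) (g2 j)
      = Coalgebra.counit (R := k) h * Coalgebra.counit (R := k) g
  cocycle : ∀ (h g f : H) {n m p : ℕ} (h1 h2 : Fin n → H) (g1 g2 : Fin m → H)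
      (f1 f2 : Fin p → H),
    IsRep2 k H h h1 h2 → IsRep2 k H g g1 g2 → IsRep2 k H f f1 f2 →
    ∑ j, ∑ l, χ (g1 j) (f1 l) * χ h (g2 j * f2 l)
      = ∑ i, ∑ j, χ (h1 i) (g1 j) * χ (h2 i * g2 j) f
  one_cocy : ∀ h : H, χ 1 h = Coalgebra.counit (R := k) h
  cocy_one : ∀ h : H, χ h 1 = Coalgebra.counit (R := k) h

/-- The twisted product `h • g = χ(h₍₁₎,g₍₁₎) h₍₂₎g₍₂₎ χ⁻¹(h₍₃₎,g₍₃₎)` of the Drinfeld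
cotwist `H^χ`, given as a bilinear map `tmul`. -/
def IsTwistedMul (χ χi : H →ₗ[k] H →ₗ[k] k) (tmul : H →ₗ[k] H →ₗ[k] H) : Prop :=
  ∀ (h g : H) {n m : ℕ} (h1 h2 h3 : Fin n → H) (g1 g2 g3 : Fin m → H),
    IsRep3 k H h h1 h2 h3 → IsRep3 k H g g1 g2 g3 →
    tmul h g = ∑ i, ∑ j, (χ (h1 i) (g1 j) * χi (h3 i) (g3 j)) • (h2 i * g2 j)

/-- A coquasitriangular structure `r` on `H`, with convolution inverse `ri`. -/
structure Coquasitriangular (r ri : H →ₗ[k] H →ₗ[k] k) : Prop where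
  conv_left : ∀ (h g : H) {n m : ℕ} (h1 h2 : Fin n → H) (g1 g2 : Fin m → H),
    IsRep2 k H h h1 h2 → IsRep2 k H g g1 g2 →
    ∑ i, ∑ j, r (h1 i) (g1 j) * ri (h2 i) (g2 j)
      = Coalgebra.counit (R := k) h * Coalgebra.counit (R := k) g
  conv_right : ∀ (h g : H) {n m : ℕ} (h1 h2 : Fin n → H) (g1 g2 : Fin m → H),
    IsRep2 k H h h1 h2 → IsRep2 k H g g1 g2 →
    ∑ i, ∑ j, ri (h1 i) (g1 j) * r (h2 i) (g2 j)
      = Coalgebra.counit (R := k) h * Coalgebra.counit (R := k) g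
  braid : ∀ (h g : H) {n m : ℕ} (h1 h2 : Fin n → H) (g1 g2 : Fin m → H),
    IsRep2 k H h h1 h2 → IsRep2 k H g g1 g2 →
    ∑ i, ∑ j, r (h2 i) (g2 j) • (g1 j * h1 i) = ∑ i, ∑ j, r (h1 i) (g1 j) • (h2 i * g2 j)
  mul_right : ∀ (h g f : H) {n : ℕ} (h1 h2 : Fin n → H), IsRep2 k H h h1 h2 →
    r h (g * f) = ∑ i, r (h1 i) g * r (h2 i) f
  mul_left : ∀ (h g f : H) {n : ℕ} (f1 f2 : Fin n → H), IsRep2 k H f f1 f2 →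
    r (h * g) f = ∑ i, r h (f1 i) * r g (f2 i)

variable (B : Type*) [Ring B] [Algebra k B]

/-- `u, ui : H → B` are convolution inverses of each other. -/
def ConvInv (u ui : H →ₗ[k] B) : Prop :=
  ∀ (h : H) {n : ℕ} (h1 h2 : Fin n → H), IsRep2 k H h h1 h2 →
    ∑ i, u (h1 i) * ui (h2 i) = Coalgebra.counit (R := k) h • (1 : B)
    ∧ ∑ i, ui (h1 i) * u (h2 i) = Coalgebra.counit (R := k) h • (1 : B)

/-- A measuring of `H` on `B`:  `h ▷ (ab) = (h₍₁₎ ▷ a)(h₍₂₎ ▷ b)` and `h ▷ 1 = ε(h)1`. -/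
structure Measuring (act : H →ₗ[k] B →ₗ[k] B) : Prop where
  act_mul : ∀ (h : H) (a b : B) {n : ℕ} (h1 h2 : Fin n → H),
    IsRep2 k H h h1 h2 → act h (a * b) = ∑ i, act (h1 i) a * act (h2 i) b
  act_one : ∀ h : H, act h 1 = Coalgebra.counit (R := k) h • (1 : B)

/-- A cocycle datum `(▷, σ)` (with chosen convolution inverse `σi` of `σ`). -/
structure CocycleDatum (act : H →ₗ[k] B →ₗ[k] B) (σ σi : H →ₗ[k] H →ₗ[k] B) : Prop where
  toMeasuring : Measuring k H B act
  conv_left : ∀ (h g : H) {n m : ℕ} (h1 h2 : Fin n → H) (g1 g2 : Fin m → H),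
    IsRep2 k H h h1 h2 → IsRep2 k H g g1 g2 →
    ∑ i, ∑ j, σ (h1 i) (g1 j) * σi (h2 i) (g2 j)
      = (Coalgebra.counit (R := k) h * Coalgebra.counit (R := k) g) • (1 : B)
  conv_right : ∀ (h g : H) {n m : ℕ} (h1 h2 : Fin n → H) (g1 g2 : Fin m → H),
    IsRep2 k H h h1 h2 → IsRep2 k H g g1 g2 →
    ∑ i, ∑ j, σi (h1 i) (g1 j) * σ (h2 i) (g2 j)
      = (Coalgebra.counit (R := k) h * Coalgebra.counit (R := k) g) • (1 : B)
  one_act : ∀ b : B, act 1 b = b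
  act_act : ∀ (h g : H) (b : B) {n m : ℕ} (h1 h2 h3 : Fin n → H) (g1 g2 g3 : Fin m → H),
    IsRep3 k H h h1 h2 h3 → IsRep3 k H g g1 g2 g3 →
    act h (act g b) = ∑ i, ∑ j, σ (h1 i) (g1 j) * act (h2 i * g2 j) b * σi (h3 i) (g3 j)
  sigma_one : ∀ h : H, σ h 1 = Coalgebra.counit (R := k) h • (1 : B)
  one_sigma : ∀ h : H, σ 1 h = Coalgebra.counit (R := k) h • (1 : B)
  cocycle : ∀ (h g f : H) {n m p : ℕ} (h1 h2 : Fin n → H) (g1 g2 : Fin m → H)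
      (f1 f2 : Fin p → H),
    IsRep2 k H h h1 h2 → IsRep2 k H g g1 g2 → IsRep2 k H f f1 f2 →
    ∑ i, ∑ j, ∑ l, act (h1 i) (σ (g1 j) (f1 l)) * σ (h2 i) (g2 j * f2 l)
      = ∑ i, ∑ j, σ (h1 i) (g1 j) * σ (h2 i * g2 j) f

/-- The cocycle cross product multiplication on `P = B ⊗ H`:
`(b#h)(c#g) = b(h₍₁₎▷c)σ(h₍₂₎,g₍₁₎) # h₍₃₎g₍₂₎`, given as a bilinear map `mult`. -/
def IsCrossMul (act : H →ₗ[k] B →ₗ[k] B) (σ : H →ₗ[k] H →ₗ[k] B)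
    (mult : B ⊗[k] H →ₗ[k] B ⊗[k] H →ₗ[k] B ⊗[k] H) : Prop :=
  ∀ (b c : B) (h g : H) {n m : ℕ} (h1 h2 h3 : Fin n → H) (g1 g2 : Fin m → H),
    IsRep3 k H h h1 h2 h3 → IsRep2 k H g g1 g2 →
    mult (b ⊗ₜ[k] h) (c ⊗ₜ[k] g)
      = ∑ i, ∑ j, (b * act (h1 i) c * σ (h2 i) (g1 j)) ⊗ₜ[k] (h3 i * g2 j)

end SweedlerDefs

section HopfDefs

variable (k : Type*) [Field k]
variable (H : Type*) [Ring H] [HopfAlgebra k H]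
variable (B : Type*) [Ring B] [Algebra k B]

/-- The cocycle Hopf algebroid multiplication on `B ⊗ B ⊗ H`:
`(b⊗b'⊗h)(c⊗c'⊗g) = b(h₍₁₎▷c)σ(h₍₂₎,g₍₁₎) ⊗ c'(S(g₍₄₎)▷b')σ(S(g₍₃₎),S(h₍₄₎)) ⊗ h₍₃₎g₍₂₎`,
given as a bilinear map `mult`. -/
def IsAlgebroidMul (act : H →ₗ[k] B →ₗ[k] B) (σ : H →ₗ[k] H →ₗ[k] B)
    (mult : B ⊗[k] (B ⊗[k] H) →ₗ[k] B ⊗[k] (B ⊗[k] H) →ₗ[k] B ⊗[k] (B ⊗[k] H)) : Prop :=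
  ∀ (b b' c c' : B) (h g : H) {n m : ℕ}
    (h1 h2 h3 h4 : Fin n → H) (g1 g2 g3 g4 : Fin m → H),
    IsRep4 k H h h1 h2 h3 h4 → IsRep4 k H g g1 g2 g3 g4 →
    mult (b ⊗ₜ[k] (b' ⊗ₜ[k] h)) (c ⊗ₜ[k] (c' ⊗ₜ[k] g))
      = ∑ i, ∑ j, (b * act (h1 i) c * σ (h2 i) (g1 j)) ⊗ₜ[k]
          ((c' * act (HopfAlgebra.antipode (R := k) (g4 j)) b'
              * σ (HopfAlgebra.antipode (R := k) (g3 j))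
                  (HopfAlgebra.antipode (R := k) (h4 i))) ⊗ₜ[k] (h3 i * g2 j))

end HopfDefs

/-! ### Convolution algebras in one and two variables -/

section Convolution

open WithConv

variable {k : Type*} [Field k] {H : Type*} [Ring H] [Bialgebra k H]
variable {A A' : Type*} [Ring A] [Algebra k A] [Ring A'] [Algebra k A']

lemma conv_ext {f g : WithConv (H →ₗ[k] A)} (e : ∀ h, f h = g h) : f = g :=
  WithConv.ext (LinearMap.ext e)

lemma conv_ext₂ {f g : WithConv (H →ₗ[k] WithConv (H →ₗ[k] A))} (e : ∀ x y, f x y = g x y) :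
    f = g :=
  conv_ext fun x => conv_ext fun y => e x y

variable (k) in
lemma exists_rep2 (h : H) : ∃ (n : ℕ) (h1 h2 : Fin n → H), IsRep2 k H h h1 h2 := by
  let r := ℛ k h
  refine ⟨r.index.card, fun i => r.left (r.index.equivFin.symm i),
    fun i => r.right (r.index.equivFin.symm i), ?_⟩
  have e : ∑ i : Fin r.index.card, r.left (r.index.equivFin.symm i) ⊗ₜ[k]
      r.right (r.index.equivFin.symm i) = ∑ i : r.index, r.left i ⊗ₜ[k] r.right i :=
    r.index.equivFin.symm.sum_comp (fun i : r.index => r.left i ⊗ₜ[k] r.right i)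
  rw [IsRep2, e, Finset.sum_coe_sort r.index (fun i => r.left i ⊗ₜ[k] r.right i), r.eq]

lemma conv_rep2 (f g : WithConv (H →ₗ[k] A)) {h : H} {n : ℕ} {h1 h2 : Fin n → H}
    (r : IsRep2 k H h h1 h2) : (f * g) h = ∑ i, f (h1 i) * g (h2 i) := by
  rw [IsRep2] at r
  simp [LinearMap.convMul_def, r]

lemma conv₂_rep2 (f g : WithConv (H →ₗ[k] WithConv (H →ₗ[k] A))) {x y : H} {n m : ℕ}
    {x1 x2 : Fin n → H} {y1 y2 : Fin m → H}
    (r : IsRep2 k H x x1 x2) (s : IsRep2 k H y y1 y2) :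
    (f * g) x y = ∑ i, ∑ j, f (x1 i) (y1 j) * g (x2 i) (y2 j) := by
  rw [conv_rep2 f g r, ofConv_sum, LinearMap.sum_apply]
  exact Finset.sum_congr rfl fun i _ => conv_rep2 _ _ s

lemma conv_rep3 (f g e : WithConv (H →ₗ[k] A)) {h : H} {n : ℕ} {h1 h2 h3 : Fin n → H}
    (r : IsRep3 k H h h1 h2 h3) : (f * g * e) h = ∑ i, f (h1 i) * g (h2 i) * e (h3 i) := by
  have key : ∀ t : H ⊗[k] H,
      LinearMap.mul' k A (TensorProduct.map (f * g).ofConv e.ofConv t) =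
      LinearMap.mul' k A (TensorProduct.map
        (LinearMap.mul' k A ∘ₗ TensorProduct.map f.ofConv g.ofConv) e.ofConv
          ((LinearMap.rTensor H (Coalgebra.comul (R := k) (A := H))) t)) := by
    intro t
    induction t with
    | zero => simp
    | add a b ha hb => simp only [map_add, ha, hb]
    | tmul a b => simp [LinearMap.convMul_def]
  have r' : (LinearMap.rTensor H (Coalgebra.comul (R := k) (A := H))) (Coalgebra.comul h) = _ := r
  rw [LinearMap.convMul_apply, key, r']
  simp

lemma sum_counit_smul_left {M : Type*} [AddCommGroup M] [Module k M] (f : H →ₗ[k] M) {h : H}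
    {n : ℕ} {h1 h2 : Fin n → H} (r : IsRep2 k H h h1 h2) :
    ∑ i, counit (R := k) (h1 i) • f (h2 i) = f h := by
  have := Coalgebra.rTensor_counit_comul (R := k) h
  rw [IsRep2] at r
  rw [r] at this
  have := congrArg (TensorProduct.lift ((LinearMap.lsmul k M).compl₂ f)) this
  simpa using this

lemma sum_counit_smul_right {M : Type*} [AddCommGroup M] [Module k M] (f : H →ₗ[k] M) {h : H}
    {n : ℕ} {h1 h2 : Fin n → H} (r : IsRep2 k H h h1 h2) :
    ∑ i, counit (R := k) (h2 i) • f (h1 i) = f h := by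
  have := Coalgebra.lTensor_counit_comul (R := k) h
  rw [IsRep2] at r
  rw [r] at this
  have := congrArg (TensorProduct.lift ((LinearMap.lsmul k M).compl₂ f).flip) this
  simpa using this

variable (k H A) in
/-- The embedding of `A` into the convolution algebra as the maps `h ↦ ε(h) a`. -/
def constConv : A →ₐ[k] WithConv (H →ₗ[k] A) :=
  AlgHom.ofLinearMap
    ((WithConv.linearEquiv k (H →ₗ[k] A)).symm.toLinearMap ∘ₗ
      LinearMap.smulRightₗ (counit (R := k) (A := H)))
    (conv_ext fun h => by simp [Algebra.algebraMap_eq_smul_one])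
    (fun a b => conv_ext fun h => by
      obtain ⟨n, h1, h2, r⟩ := exists_rep2 k h
      rw [conv_rep2 _ _ r]
      simp only [LinearMap.comp_apply]
      simpa [smul_smul, mul_comm] using
        (sum_counit_smul_left ((counit (R := k) (A := H)).smulRight (a * b)) r).symm)

@[simp] lemma constConv_apply (a : A) (h : H) :
    constConv k H A a h = counit (R := k) h • a := rfl

/-- Composition with an algebra map, as a map of convolution algebras. -/
def mapConv (φ : A →ₐ[k] A') : WithConv (H →ₗ[k] A) →* WithConv (H →ₗ[k] A') where
  toFun f := toConv (φ.toLinearMap ∘ₗ f.ofConv)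
  map_one' := conv_ext fun h => by simp
  map_mul' f g := conv_ext fun h => by
    obtain ⟨n, h1, h2, r⟩ := exists_rep2 k h
    rw [conv_rep2 _ _ r]
    have : φ ((f * g) h) = _ := congrArg φ (conv_rep2 f g r)
    simpa using this

@[simp] lemma mapConv_apply (φ : A →ₐ[k] A') (f : WithConv (H →ₗ[k] A)) (h : H) :
    mapConv φ f h = φ (f h) := rfl

lemma IsRep2.mul {x y : H} {n m : ℕ} {x1 x2 : Fin n → H} {y1 y2 : Fin m → H}
    (r : IsRep2 k H x x1 x2) (s : IsRep2 k H y y1 y2) :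
    comul (R := k) (x * y) = ∑ i, ∑ j, (x1 i * y1 j) ⊗ₜ[k] (x2 i * y2 j) := by
  rw [IsRep2] at r s
  rw [Bialgebra.comul_mul, r, s, Finset.sum_mul_sum]
  simp

/-- Pullback along the multiplication of `H`: the map `F` becomes `(x, y) ↦ F(xy)`. -/
def mulConv : WithConv (H →ₗ[k] A) →* WithConv (H →ₗ[k] WithConv (H →ₗ[k] A)) where
  toFun F := toConv ((WithConv.linearEquiv k (H →ₗ[k] A)).symm.toLinearMap ∘ₗ
    (LinearMap.mul k H).compr₂ F.ofConv)
  map_one' := conv_ext₂ fun x y => by simp [Algebra.algebraMap_eq_smul_one, smul_smul]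
  map_mul' F G := conv_ext₂ fun x y => by
    obtain ⟨n, x1, x2, r⟩ := exists_rep2 k x
    obtain ⟨m, y1, y2, s⟩ := exists_rep2 k y
    rw [conv₂_rep2 _ _ r s]
    simp [r.mul s]

@[simp] lemma mulConv_apply (F : WithConv (H →ₗ[k] A)) (x y : H) :
    mulConv F x y = F (x * y) := rfl

/-- A map of the first of two variables. -/
def fstConv : WithConv (H →ₗ[k] A) →* WithConv (H →ₗ[k] WithConv (H →ₗ[k] A)) :=
  mapConv (constConv k H A)

/-- A map of the second of two variables. -/
def sndConv : WithConv (H →ₗ[k] A) →* WithConv (H →ₗ[k] WithConv (H →ₗ[k] A)) :=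
  (constConv k H (WithConv (H →ₗ[k] A)) : _ →* _)

@[simp] lemma fstConv_apply (f : WithConv (H →ₗ[k] A)) (x y : H) :
    fstConv f x y = counit (R := k) y • f x := rfl

@[simp] lemma sndConv_apply (f : WithConv (H →ₗ[k] A)) (x y : H) :
    sndConv f x y = counit (R := k) x • f y := rfl

lemma fst_mul_apply (f : WithConv (H →ₗ[k] A)) (g : WithConv (H →ₗ[k] WithConv (H →ₗ[k] A)))
    {x : H} (y : H) {n : ℕ} {x1 x2 : Fin n → H} (r : IsRep2 k H x x1 x2) :
    (fstConv f * g) x y = ∑ i, f (x1 i) * g (x2 i) y := by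
  obtain ⟨m, y1, y2, s⟩ := exists_rep2 k y
  rw [conv₂_rep2 _ _ r s]
  refine Finset.sum_congr rfl fun i _ => ?_
  simpa using sum_counit_smul_left (LinearMap.mulLeft k (f (x1 i)) ∘ₗ (g (x2 i)).ofConv) s

lemma mul_fst_apply (f : WithConv (H →ₗ[k] A)) (g : WithConv (H →ₗ[k] WithConv (H →ₗ[k] A)))
    {x : H} (y : H) {n : ℕ} {x1 x2 : Fin n → H} (r : IsRep2 k H x x1 x2) :
    (g * fstConv f) x y = ∑ i, g (x1 i) y * f (x2 i) := by
  obtain ⟨m, y1, y2, s⟩ := exists_rep2 k y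
  rw [conv₂_rep2 _ _ r s]
  refine Finset.sum_congr rfl fun i _ => ?_
  simpa using sum_counit_smul_right (LinearMap.mulRight k (f (x2 i)) ∘ₗ (g (x1 i)).ofConv) s

lemma fst_mul_snd (f g : WithConv (H →ₗ[k] A)) (x y : H) :
    (fstConv f * sndConv g) x y = f x * g y := by
  obtain ⟨n, x1, x2, r⟩ := exists_rep2 k x
  rw [fst_mul_apply f _ y r]
  simpa using sum_counit_smul_right (LinearMap.mulRight k (g y) ∘ₗ f.ofConv) r

lemma snd_mul_fst (f g : WithConv (H →ₗ[k] A)) (x y : H) :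
    (sndConv g * fstConv f) x y = g y * f x := by
  obtain ⟨n, x1, x2, r⟩ := exists_rep2 k x
  rw [mul_fst_apply f _ y r]
  simpa using sum_counit_smul_left (LinearMap.mulLeft k (g y) ∘ₗ f.ofConv) r

end Convolution

/-! ### The antipode and coproducts -/

section Antipode

open WithConv HopfAlgebra

variable {k : Type*} [Field k] {H : Type*} [Ring H] [HopfAlgebra k H]
variable {A : Type*} [Ring A] [Algebra k A]

lemma algHom_conv_antipode (φ : H →ₐ[k] A) :
    (toConv φ.toLinearMap : WithConv (H →ₗ[k] A)) *
      toConv (φ.toLinearMap ∘ₗ antipode k) = 1 := by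
  have := congrArg (mapConv φ) (LinearMap.id_mul_antipode (R := k) (C := H))
  rwa [map_mul, map_one] at this

lemma antipode_conv_algHom (φ : H →ₐ[k] A) :
    (toConv (φ.toLinearMap ∘ₗ antipode k) : WithConv (H →ₗ[k] A)) *
      toConv φ.toLinearMap = 1 := by
  have := congrArg (mapConv φ) (LinearMap.antipode_mul_id (R := k) (C := H))
  rwa [map_mul, map_one] at this

/-- The antipode reverses the coproduct: `Δ(S h) = S h₍₂₎ ⊗ S h₍₁₎`.  In the convolution algebra
`Hom(H, H ⊗ H)` the coproduct is the product of the two inclusions of `H`, and both sides are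
inverse to it. -/
lemma IsRep2.map_antipode {h : H} {n : ℕ} {h1 h2 : Fin n → H} (r : IsRep2 k H h h1 h2) :
    IsRep2 k H (antipode k h) (fun i => antipode k (h2 i)) (fun i => antipode k (h1 i)) := by
  let i1 : H →ₐ[k] H ⊗[k] H := Algebra.TensorProduct.includeLeft
  let i2 : H →ₐ[k] H ⊗[k] H := Algebra.TensorProduct.includeRight
  let u1 : WithConv (H →ₗ[k] H ⊗[k] H) := toConv i1.toLinearMap
  let u2 : WithConv (H →ₗ[k] H ⊗[k] H) := toConv i2.toLinearMap
  let v1 : WithConv (H →ₗ[k] H ⊗[k] H) := toConv (i1.toLinearMap ∘ₗ antipode k)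
  let v2 : WithConv (H →ₗ[k] H ⊗[k] H) := toConv (i2.toLinearMap ∘ₗ antipode k)
  have hv1 : v1 * u1 = 1 := antipode_conv_algHom i1
  have hv2 : v2 * u2 = 1 := antipode_conv_algHom i2
  have hu : u1 * u2 = toConv (comul (R := k) (A := H)) := by
    refine conv_ext fun h => ?_
    obtain ⟨n, h1, h2, r⟩ := exists_rep2 k h
    rw [conv_rep2 _ _ r]
    rw [IsRep2] at r
    simp [u1, u2, i1, i2, r]
  have hl : (v2 * v1) * toConv (comul (R := k) (A := H)) = 1 := by
    rw [← hu, mul_assoc, ← mul_assoc v1, hv1, one_mul, hv2]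
  have e : v2 * v1 = toConv (comul ∘ₗ antipode k) :=
    left_inv_eq_right_inv hl LinearMap.comul_right_inv
  have := congrArg (fun f => f h) e
  simp only [conv_rep2 _ _ r] at this
  rw [IsRep2]
  simpa [v1, v2, i1, i2] using this.symm

/-- Composition with the antipode turns the convolution product of `Hom(H, A)` into the opposite
of that of `Hom(H, Aᵐᵒᵖ)`; this is the form in which the antipode reverses coproducts below. -/
def antipodeOp : WithConv (H →ₗ[k] A) →ₗ[k] WithConv (H →ₗ[k] Aᵐᵒᵖ) where
  toFun f := toConv ((MulOpposite.opLinearEquiv k).toLinearMap ∘ₗ f.ofConv ∘ₗ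
    antipode k)
  map_add' _ _ := rfl
  map_smul' _ _ := rfl

@[simp] lemma antipodeOp_apply (f : WithConv (H →ₗ[k] A)) (h : H) :
    antipodeOp f h = MulOpposite.op (f (antipode k h)) := rfl

lemma antipodeOp_mul (f g : WithConv (H →ₗ[k] A)) :
    antipodeOp (f * g) = antipodeOp g * antipodeOp f := by
  refine conv_ext fun h => ?_
  obtain ⟨n, h1, h2, r⟩ := exists_rep2 k h
  rw [conv_rep2 _ _ r, antipodeOp_apply, conv_rep2 _ _ r.map_antipode]
  simp

/-- `(w₁ * w₂ * w₃)(S h) = w₁(S h₍₃₎) w₂(S h₍₂₎) w₃(S h₍₁₎)`. -/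
lemma conv_antipode_rep3 (w1 w2 w3 : WithConv (H →ₗ[k] A)) {h : H} {n : ℕ} {a b c : Fin n → H}
    (r : IsRep3 k H h a b c) :
    (w1 * w2 * w3) (antipode k h) =
      ∑ i, w1 (antipode k (c i)) * w2 (antipode k (b i)) * w3 (antipode k (a i)) := by
  have := conv_rep3 (antipodeOp w3) (antipodeOp w2) (antipodeOp w1) r
  rw [mul_assoc, ← antipodeOp_mul, ← antipodeOp_mul, antipodeOp_apply] at this
  apply MulOpposite.op_injective
  simpa [mul_assoc] using this

end Antipode

/-! ### Iterated coproducts as convolution products -/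

section Reps

open WithConv

variable {k : Type*} [Field k] {H : Type*} [Ring H] [Bialgebra k H]
variable {A : Type*} [Ring A] [Algebra k A]

lemma exists_sum_tmul3 (t : (H ⊗[k] H) ⊗[k] H) :
    ∃ (n : ℕ) (a b c : Fin n → H), t = ∑ i, (a i ⊗ₜ[k] b i) ⊗ₜ[k] c i := by
  induction t with
  | zero => exact ⟨0, Fin.elim0, Fin.elim0, Fin.elim0, by simp⟩
  | add x y hx hy =>
    obtain ⟨n, a, b, c, rfl⟩ := hx
    obtain ⟨m, a', b', c', rfl⟩ := hy
    exact ⟨n + m, Fin.append a a', Fin.append b b', Fin.append c c', by simp [Fin.sum_univ_add]⟩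
  | tmul u z =>
    induction u with
    | zero => exact ⟨0, Fin.elim0, Fin.elim0, Fin.elim0, by simp⟩
    | add x y hx hy =>
      obtain ⟨n, a, b, c, hx⟩ := hx
      obtain ⟨m, a', b', c', hy⟩ := hy
      exact ⟨n + m, Fin.append a a', Fin.append b b', Fin.append c c', by
        simp [Fin.sum_univ_add, TensorProduct.add_tmul, hx, hy]⟩
    | tmul x y => exact ⟨1, fun _ => x, fun _ => y, fun _ => z, by simp⟩

variable (k) in
lemma exists_rep3 (h : H) : ∃ (n : ℕ) (a b c : Fin n → H), IsRep3 k H h a b c :=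
  exists_sum_tmul3 (Δ3 k H h)

lemma conv₂_rep3 (f g e : WithConv (H →ₗ[k] WithConv (H →ₗ[k] A))) {x y : H} {n m : ℕ}
    {x1 x2 x3 : Fin n → H} {y1 y2 y3 : Fin m → H}
    (r : IsRep3 k H x x1 x2 x3) (s : IsRep3 k H y y1 y2 y3) :
    (f * g * e) x y = ∑ i, ∑ j, f (x1 i) (y1 j) * g (x2 i) (y2 j) * e (x3 i) (y3 j) := by
  rw [conv_rep3 f g e r, ofConv_sum, LinearMap.sum_apply]
  exact Finset.sum_congr rfl fun i _ => conv_rep3 _ _ _ s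

lemma conv_comp {X : Type*} [AddCommMonoid X] [Module k X] (F : X →ₗ[k] A) (d : H →ₗ[k] X)
    (f : WithConv (H →ₗ[k] A)) :
    toConv (F ∘ₗ d) * f = toConv ((LinearMap.mul' k A ∘ₗ TensorProduct.map F f.ofConv) ∘ₗ
      (LinearMap.rTensor H d ∘ₗ comul)) := by
  rw [LinearMap.convMul_def]
  congr 1
  rw [LinearMap.comp_assoc, ← LinearMap.comp_assoc _ _ (TensorProduct.map F f.ofConv),
    LinearMap.map_comp_rTensor]

lemma conv_rep5_two (Ψ : H ⊗[k] H →ₗ[k] A) (f3 f4 f5 : WithConv (H →ₗ[k] A))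
    {h : H} {n : ℕ} {h1 h2 h3 h4 h5 : Fin n → H} (r : IsRep5 k H h h1 h2 h3 h4 h5) :
    (toConv (Ψ ∘ₗ comul) * f3 * f4 * f5) h =
      ∑ i, Ψ (h1 i ⊗ₜ h2 i) * f3 (h3 i) * f4 (h4 i) * f5 (h5 i) := by
  rw [conv_comp, ← Δ3, conv_comp, ← Δ4, conv_comp, ← Δ5, ofConv_toConv, LinearMap.comp_apply, r]
  simp

lemma conv_rep6_two (Ψ : H ⊗[k] H →ₗ[k] A) (f3 f4 f5 f6 : WithConv (H →ₗ[k] A))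
    {h : H} {n : ℕ} {h1 h2 h3 h4 h5 h6 : Fin n → H} (r : IsRep6 k H h h1 h2 h3 h4 h5 h6) :
    (toConv (Ψ ∘ₗ comul) * f3 * f4 * f5 * f6) h =
      ∑ i, Ψ (h1 i ⊗ₜ h2 i) * f3 (h3 i) * f4 (h4 i) * f5 (h5 i) * f6 (h6 i) := by
  rw [conv_comp, ← Δ3, conv_comp, ← Δ4, conv_comp, ← Δ5, conv_comp, ← Δ6, ofConv_toConv,
    LinearMap.comp_apply, r]
  simp

lemma mul_constConv_apply (f : WithConv (H →ₗ[k] A)) (a : A) (h : H) :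
    (f * constConv k H A a) h = f h * a := by
  obtain ⟨n, h1, h2, r⟩ := exists_rep2 k h
  rw [conv_rep2 _ _ r]
  simpa using sum_counit_smul_right (LinearMap.mulRight k a ∘ₗ f.ofConv) r

lemma constConv_mul_apply (f : WithConv (H →ₗ[k] A)) (a : A) (h : H) :
    (constConv k H A a * f) h = a * f h := by
  obtain ⟨n, h1, h2, r⟩ := exists_rep2 k h
  rw [conv_rep2 _ _ r]
  simpa using sum_counit_smul_left (LinearMap.mulLeft k a ∘ₗ f.ofConv) r

/-- Sweedler sums in two variables of a product of maps, the first of which takes two legs of each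
variable and the last of which depends on one variable only, as a convolution product. -/
lemma conv₂_rep65 (Ψ : H ⊗[k] H →ₗ[k] H ⊗[k] H →ₗ[k] A)
    (f3 f4 f5 : WithConv (H →ₗ[k] WithConv (H →ₗ[k] A))) (f6 : WithConv (H →ₗ[k] A))
    {h g : H} {n m : ℕ} {h1 h2 h3 h4 h5 h6 : Fin n → H} {g1 g2 g3 g4 g5 : Fin m → H}
    (r : IsRep6 k H h h1 h2 h3 h4 h5 h6) (s : IsRep5 k H g g1 g2 g3 g4 g5) :
    (toConv (((WithConv.linearEquiv k (H →ₗ[k] A)).symm.toLinearMap ∘ₗ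
        LinearMap.lcomp k A comul ∘ₗ Ψ) ∘ₗ comul) * f3 * f4 * f5 * fstConv f6) h g =
      ∑ i, ∑ j, Ψ (h1 i ⊗ₜ h2 i) (g1 j ⊗ₜ g2 j) * f3 (h3 i) (g3 j) * f4 (h4 i) (g4 j) *
        f5 (h5 i) (g5 j) * f6 (h6 i) := by
  rw [conv_rep6_two _ _ _ _ _ r, ofConv_sum, LinearMap.sum_apply]
  refine Finset.sum_congr rfl fun i _ => ?_
  rw [← Finset.sum_mul]
  have e := conv_rep5_two (Ψ (h1 i ⊗ₜ h2 i)) (f3 (h3 i)) (f4 (h4 i)) (f5 (h5 i)) s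
  rw [← e]
  exact mul_constConv_apply _ _ _

end Reps

/-! ### Representations of the cross product -/

section CrossRep

open WithConv HopfAlgebra

variable {k : Type*} [Field k] {H : Type*} [Ring H] [HopfAlgebra k H]
variable {B : Type*} [Ring B] [Algebra k B] {A : Type*} [Ring A] [Algebra k A]
variable {act : H →ₗ[k] B →ₗ[k] B} {σ σi : H →ₗ[k] H →ₗ[k] B}

/-- A bilinear map as an element of the convolution algebra in two variables. -/
def biConv (τ : H →ₗ[k] H →ₗ[k] A) : WithConv (H →ₗ[k] WithConv (H →ₗ[k] A)) :=
  toConv ((WithConv.linearEquiv k (H →ₗ[k] A)).symm.toLinearMap ∘ₗ τ)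

@[simp] lemma biConv_apply (τ : H →ₗ[k] H →ₗ[k] A) (x y : H) : biConv τ x y = τ x y := rfl

variable (A act σ) in
/-- A representation of the cross product `B #_σ H` in an algebra `A`, in factored form.  The
algebra `B` acts through `lam`, the element `1 # h` acts through `j = m * t`, where `t` is a
representation of `H` covariant for `▷`, and `m` is convolution invertible and commutes with the
maps `h ↦ lam (h ▷ b)`.  The map `q(h, g)` is the translate of `m(g)` by `h`, in terms of which the
cocycle axiom reads `m(h₍₁₎) q(h₍₂₎, g) = lam(σ(h₍₁₎, g₍₁₎)) m(h₍₂₎ g₍₂₎)`. -/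
structure CrossRep where
  t : H →ₐ[k] A
  lam : B →ₐ[k] A
  m : WithConv (H →ₗ[k] A)
  mi : WithConv (H →ₗ[k] A)
  q : H →ₗ[k] H →ₗ[k] A
  m_one : m 1 = 1
  m_mul_mi : m * mi = 1
  mi_mul_m : mi * m = 1
  cov : ∀ b, toConv (lam.toLinearMap ∘ₗ act.flip b) * toConv t.toLinearMap =
    toConv t.toLinearMap * constConv k H A (lam b)
  comm : ∀ b, m * toConv (lam.toLinearMap ∘ₗ act.flip b) =
    toConv (lam.toLinearMap ∘ₗ act.flip b) * m
  t_mul_m : ∀ {n : ℕ} (x y : H) (x1 x2 : Fin n → H), IsRep2 k H x x1 x2 →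
    t x * m y = ∑ i, q (x1 i) y * t (x2 i)
  m_mul_q : ∀ {n n' : ℕ} (x y : H) (x1 x2 : Fin n → H) (y1 y2 : Fin n' → H),
    IsRep2 k H x x1 x2 → IsRep2 k H y y1 y2 →
    ∑ i, m (x1 i) * q (x2 i) y = ∑ i, ∑ j, lam (σ (x1 i) (y1 j)) * m (x2 i * y2 j)

lemma Δ4_assoc (h : H) : TensorProduct.assoc k (H ⊗[k] H) H H (Δ4 k H h) =
    TensorProduct.map comul comul (comul (R := k) h) := by
  have e : ∀ t : (H ⊗[k] H) ⊗[k] H, TensorProduct.assoc k (H ⊗[k] H) H H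
      (LinearMap.rTensor H (LinearMap.rTensor H comul) t) =
      LinearMap.rTensor (H ⊗[k] H) (comul (R := k)) (TensorProduct.assoc k H H H t) := by
    intro t
    induction t with
    | zero => simp
    | add a b ha hb => simp only [map_add, ha, hb]
    | tmul u c =>
      induction u with
      | zero => simp
      | add a b ha hb => simp only [map_add, TensorProduct.add_tmul, ha, hb]
      | tmul a b => simp
  rw [Δ4, Δ3, LinearMap.rTensor_comp, LinearMap.comp_apply, LinearMap.comp_apply, e,
    Coalgebra.coassoc_apply, ← LinearMap.comp_apply, LinearMap.rTensor_comp_lTensor]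

namespace CrossRep

variable (D : CrossRep A act σ)

/-- The representation `t` of `H` as an element of `Hom(H, A)`. -/
def tC : WithConv (H →ₗ[k] A) := toConv D.t.toLinearMap

/-- The convolution inverse `h ↦ t (S h)` of `t`. -/
def tCi : WithConv (H →ₗ[k] A) := toConv (D.t.toLinearMap ∘ₗ antipode k)

/-- The map `h ↦ lam (h ▷ b)`. -/
def lrho (b : B) : WithConv (H →ₗ[k] A) := toConv (D.lam.toLinearMap ∘ₗ act.flip b)

/-- The map `j = m * t`. -/
def j : WithConv (H →ₗ[k] A) := D.m * D.tC

/-- The convolution inverse of `j`. -/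
def ji : WithConv (H →ₗ[k] A) := D.tCi * D.mi

/-- The map `t⁻¹ * m⁻¹ * t`, whose values commute with `lam`. -/
def nC : WithConv (H →ₗ[k] A) := D.ji * D.tC

/-- The map `(x, y) ↦ lam (τ(x, y))`. -/
def lamConv (τ : H →ₗ[k] H →ₗ[k] B) : WithConv (H →ₗ[k] WithConv (H →ₗ[k] A)) :=
  biConv (τ.compr₂ D.lam.toLinearMap)

@[simp] lemma tC_apply (h : H) : D.tC h = D.t h := rfl
@[simp] lemma tCi_apply (h : H) : D.tCi h = D.t (antipode k h) := rfl
@[simp] lemma lrho_apply (b : B) (h : H) : D.lrho b h = D.lam (act h b) := rfl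
@[simp] lemma lamConv_apply (τ : H →ₗ[k] H →ₗ[k] B) (x y : H) :
    D.lamConv τ x y = D.lam (τ x y) := rfl

lemma tC_mul_tCi : D.tC * D.tCi = 1 := algHom_conv_antipode _
lemma tCi_mul_tC : D.tCi * D.tC = 1 := antipode_conv_algHom _

lemma lamConv_inv_mul (hcd : CocycleDatum k H B act σ σi) : D.lamConv σi * D.lamConv σ = 1 := by
  refine conv_ext₂ fun x y => ?_
  obtain ⟨n, x1, x2, r⟩ := exists_rep2 k x
  obtain ⟨m, y1, y2, s⟩ := exists_rep2 k y
  rw [conv₂_rep2 _ _ r s]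
  have := congrArg D.lam (hcd.conv_right x y x1 x2 y1 y2 r s)
  simpa [Algebra.algebraMap_eq_smul_one, smul_smul] using this

lemma mulConv_tC : mulConv D.tC = fstConv D.tC * sndConv D.tC :=
  conv_ext₂ fun x y => by rw [fst_mul_snd]; simp

/-- The cocycle axiom: `j(h) j(g) = lam(σ(h₍₁₎, g₍₁₎)) j(h₍₂₎ g₍₂₎)`. -/
lemma j_mul_j : fstConv D.j * sndConv D.j = D.lamConv σ * mulConv D.j := by
  have e1 : fstConv D.tC * sndConv D.m = biConv D.q * fstConv D.tC := by
    refine conv_ext₂ fun x y => ?_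
    obtain ⟨n, x1, x2, r⟩ := exists_rep2 k x
    rw [fst_mul_snd, mul_fst_apply _ _ _ r]
    exact D.t_mul_m x y x1 x2 r
  have e2 : fstConv D.m * biConv D.q = D.lamConv σ * mulConv D.m := by
    refine conv_ext₂ fun x y => ?_
    obtain ⟨n, x1, x2, r⟩ := exists_rep2 k x
    obtain ⟨m, y1, y2, s⟩ := exists_rep2 k y
    rw [fst_mul_apply _ _ _ r, conv₂_rep2 _ _ r s]
    exact D.m_mul_q x y x1 x2 y1 y2 r s
  rw [j, map_mul, map_mul, map_mul, mulConv_tC, ← mul_assoc, mul_assoc (fstConv D.m), e1,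
    ← mul_assoc (fstConv D.m), e2]
  simp only [mul_assoc]

lemma j_mul_ji : D.j * D.ji = 1 := by
  rw [j, ji, mul_assoc, ← mul_assoc D.tC, tC_mul_tCi, one_mul, D.m_mul_mi]

lemma ji_mul_j : D.ji * D.j = 1 := by
  rw [j, ji, mul_assoc, ← mul_assoc D.mi, D.mi_mul_m, one_mul, tCi_mul_tC]

/-- The inverse form of `j_mul_j`. -/
lemma mulConv_ji_mul (hcd : CocycleDatum k H B act σ σi) :
    mulConv D.ji * D.lamConv σi = sndConv D.ji * fstConv D.ji := by
  have e1 : mulConv D.ji * D.lamConv σi * (fstConv D.j * sndConv D.j) = 1 := by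
    rw [j_mul_j, mul_assoc, ← mul_assoc (D.lamConv σi), lamConv_inv_mul D hcd, one_mul,
      ← map_mul, ji_mul_j, map_one]
  have e2 : fstConv D.j * sndConv D.j * (sndConv D.ji * fstConv D.ji) = 1 := by
    rw [mul_assoc, ← mul_assoc (sndConv D.j), ← map_mul, j_mul_ji, map_one, one_mul,
      ← map_mul, j_mul_ji, map_one]
  exact left_inv_eq_right_inv e1 e2

lemma lrho_mul_tC (b : B) : D.lrho b * D.tC = D.tC * constConv k H A (D.lam b) := D.cov b

lemma tCi_mul_lrho (b : B) : D.tCi * D.lrho b = constConv k H A (D.lam b) * D.tCi := by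
  calc D.tCi * D.lrho b = D.tCi * (D.lrho b * D.tC) * D.tCi := by
        rw [mul_assoc, mul_assoc, tC_mul_tCi, mul_one]
    _ = _ := by rw [lrho_mul_tC, ← mul_assoc, tCi_mul_tC, one_mul]

lemma mi_mul_lrho (b : B) : D.mi * D.lrho b = D.lrho b * D.mi := by
  have c : D.m * D.lrho b = D.lrho b * D.m := D.comm b
  calc D.mi * D.lrho b = D.mi * (D.lrho b * D.m) * D.mi := by
        rw [mul_assoc, mul_assoc, D.m_mul_mi, mul_one]
    _ = D.lrho b * D.mi := by rw [← c, ← mul_assoc D.mi, D.mi_mul_m, one_mul]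

lemma ji_mul_lrho (b : B) : D.ji * D.lrho b = constConv k H A (D.lam b) * D.ji := by
  rw [ji, mul_assoc, mi_mul_lrho, ← mul_assoc, tCi_mul_lrho, mul_assoc]

lemma nC_mul_lam (b : B) (h : H) : D.nC h * D.lam b = D.lam b * D.nC h := by
  have e : D.nC * constConv k H A (D.lam b) = constConv k H A (D.lam b) * D.nC := by
    rw [nC, mul_assoc, ← lrho_mul_tC, ← mul_assoc, ji_mul_lrho, mul_assoc]
  have := congrArg (fun f => f h) e
  simpa only [mul_constConv_apply, constConv_mul_apply] using this

/-- The algebraic core of the identity: the left-hand side is a product in the convolution algebra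
of maps of `(h, g)`, and it simplifies to `lam(c) j⁻¹(g) n(h)`. -/
lemma chain (hcd : CocycleDatum k H B act σ σi) (c : B) (h g : H) :
    (mulConv D.nC * mulConv D.tCi * D.lamConv σi * mulConv (D.lrho c) * fstConv D.tC) h g =
      D.lam c * D.ji g * D.nC h := by
  have e1 : mulConv (D.lrho c) * fstConv D.tC = fstConv D.tC * sndConv (D.lrho c) := by
    have hc : sndConv (constConv k H A (D.lam c)) = mulConv (constConv k H A (D.lam c)) :=
      conv_ext₂ fun x y => by simp [smul_smul]
    have e : mulConv (D.lrho c) * mulConv D.tC =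
        fstConv D.tC * sndConv (D.lrho c) * sndConv D.tC := by
      rw [← map_mul, lrho_mul_tC, mul_assoc, ← map_mul, lrho_mul_tC, map_mul,
        map_mul, mulConv_tC, hc, mul_assoc]
    have := congrArg (· * sndConv D.tCi) e
    simpa only [mulConv_tC, mul_assoc, ← map_mul, tC_mul_tCi, map_one, mul_one] using this
  have e2 : fstConv D.nC * sndConv (D.lrho c) = sndConv (D.lrho c) * fstConv D.nC :=
    conv_ext₂ fun x y => by rw [fst_mul_snd, snd_mul_fst, lrho_apply, nC_mul_lam]
  have e3 : mulConv D.nC * mulConv D.tCi = mulConv D.ji := by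
    rw [← map_mul, nC, mul_assoc, tC_mul_tCi, mul_one]
  rw [e3, mulConv_ji_mul D hcd, mul_assoc, e1, mul_assoc (sndConv D.ji), ← mul_assoc (fstConv D.ji),
    ← map_mul, ← nC, e2, ← mul_assoc, ← map_mul, ji_mul_lrho, snd_mul_fst,
    constConv_mul_apply]

lemma j_one : D.j 1 = 1 := by
  have r : IsRep2 k H 1 (fun _ : Fin 1 => 1) (fun _ => 1) := by
    simp [IsRep2, Algebra.TensorProduct.one_def]
  rw [j, conv_rep2 _ _ r]
  simp [D.m_one]

/-- The inverse of `j` in terms of the antipode: `j⁻¹(h) = lam(σ⁻¹(S h₍₂₎, h₍₃₎)) j(S h₍₁₎)`.  The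
right-hand side is a left inverse of `j` since `lam(σ⁻¹(x₍₁₎, y₍₁₎)) j(x₍₂₎) j(y₍₂₎) = j(xy)`, which
for `x = S h₍₁₎` and `y = h₍₂₎` is `ε(h)`. -/
lemma ji_eq (hcd : CocycleDatum k H B act σ σi) {h : H} {n : ℕ} {ha hb hc : Fin n → H}
    (r : IsRep3 k H h ha hb hc) :
    D.ji h = ∑ i, D.lam (σi (antipode k (hb i)) (hc i)) * D.j (antipode k (ha i)) := by
  let J : (H ⊗[k] H) ⊗[k] H →ₗ[k] A :=
    LinearMap.mul' k A ∘ₗ (TensorProduct.comm k A A).toLinearMap ∘ₗ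
      TensorProduct.map (D.j.ofConv ∘ₗ antipode k)
        (D.lam.toLinearMap ∘ₗ TensorProduct.lift
          (σi.compl₁₂ (antipode k) LinearMap.id)) ∘ₗ
      (TensorProduct.assoc k H H H).toLinearMap
  have hJ : ∀ a b c, J ((a ⊗ₜ b) ⊗ₜ c) = D.lam (σi (antipode k b) c) * D.j (antipode k a) := by
    simp [J]
  have e : toConv (J ∘ₗ Δ3 k H) * D.j = 1 := by
    refine conv_ext fun h => ?_
    obtain ⟨n, u, v, r⟩ := exists_rep2 k h
    choose nu u1 u2 ru using fun i => exists_rep2 k (u i)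
    choose nv v1 v2 rv using fun i => exists_rep2 k (v i)
    have e4 : Δ4 k H h = ∑ i, ∑ a, ∑ b, ((u1 i a ⊗ₜ[k] u2 i a) ⊗ₜ[k] v1 i b) ⊗ₜ[k] v2 i b := by
      apply (TensorProduct.assoc k (H ⊗[k] H) H H).injective
      rw [Δ4_assoc, show comul (R := k) h = _ from r]
      simp only [map_sum, TensorProduct.map_tmul, TensorProduct.assoc_tmul]
      refine Finset.sum_congr rfl fun i _ => ?_
      rw [show comul (R := k) (u i) = _ from ru i, show comul (R := k) (v i) = _ from rv i,
        TensorProduct.sum_tmul]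
      simp only [TensorProduct.tmul_sum]
    have ej : D.lamConv σi * (fstConv D.j * sndConv D.j) = mulConv D.j := by
      rw [j_mul_j, ← mul_assoc, lamConv_inv_mul D hcd, one_mul]
    have es : ∑ i, antipode k (u i) * v i = algebraMap k H (counit h) := by
      have := HopfAlgebra.mul_antipode_rTensor_comul_apply (R := k) h
      rw [show comul (R := k) h = _ from r] at this
      simpa using this
    rw [conv_comp, ← Δ4, ofConv_toConv, LinearMap.comp_apply, e4]
    calc _ = ∑ i, D.j (antipode k (u i) * v i) := by
          rw [map_sum]
          refine Finset.sum_congr rfl fun i _ => ?_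
          have := congrArg (fun f => f (antipode k (u i)) (v i)) ej
          simp only [mulConv_apply, conv₂_rep2 _ _ (ru i).map_antipode (rv i), fst_mul_snd,
            lamConv_apply] at this
          rw [← this]
          simp [hJ, mul_assoc]
      _ = _ := by
          rw [← map_sum, es]
          simp [Algebra.algebraMap_eq_smul_one, j_one]
  rw [← left_inv_eq_right_inv e D.j_mul_ji, ofConv_toConv, LinearMap.comp_apply, r, map_sum]
  simp only [hJ]

end CrossRep

/-- Applying a convolution product in two variables to a vector is compatible with maps `ι` which
intertwine the factors. -/
lemma intertwine_mul {A' V V' X : Type*} [Ring A'] [Algebra k A']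
    [AddCommGroup V] [Module k V] [AddCommGroup V'] [Module k V'] [AddCommGroup X] [Module k X]
    (φ : A →ₐ[k] Module.End k V) (φ' : A' →ₐ[k] Module.End k V')
    (ι : V →ₗ[k] V') (P : V →ₗ[k] X) (Q : V' →ₗ[k] X)
    {f1 f2 : WithConv (H →ₗ[k] WithConv (H →ₗ[k] A))}
    {F1 F2 : WithConv (H →ₗ[k] WithConv (H →ₗ[k] A'))}
    (h1 : ∀ x y v, P (φ (f1 x y) v) = Q (φ' (F1 x y) (ι v)))
    (h2 : ∀ x y v, ι (φ (f2 x y) v) = φ' (F2 x y) (ι v)) (x y : H) (v : V) :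
    P (φ ((f1 * f2) x y) v) = Q (φ' ((F1 * F2) x y) (ι v)) := by
  obtain ⟨n, x1, x2, r⟩ := exists_rep2 k x
  obtain ⟨m, y1, y2, s⟩ := exists_rep2 k y
  rw [conv₂_rep2 _ _ r s, conv₂_rep2 _ _ r s]
  simp [h1, h2]

end CrossRep

/-! ### The representation on `Hom(H, B)` -/

section Operators

open WithConv HopfAlgebra

variable {k : Type*} [Field k] {H : Type*} [Ring H] [HopfAlgebra k H]
variable {B : Type*} [Ring B] [Algebra k B]
variable {act : H →ₗ[k] B →ₗ[k] B} {σ σi : H →ₗ[k] H →ₗ[k] B}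

variable (k H B) in
/-- The convolution algebra `Hom(H, B)`. -/
abbrev ConvAlg := WithConv (H →ₗ[k] B)

variable (k H B) in
/-- The linear operators on the convolution algebra `Hom(H, B)`. -/
abbrev ConvEnd := Module.End k (ConvAlg k H B)

/-- The orbit map `b ↦ (x ↦ x ▷ b)`, an algebra map `B → Hom(H, B)` because `▷` is a measuring. -/
def orb (hm : Measuring k H B act) : B →ₐ[k] ConvAlg k H B :=
  AlgHom.ofLinearMap ((WithConv.linearEquiv k (H →ₗ[k] B)).symm.toLinearMap ∘ₗ act.flip)
    (conv_ext fun h => by simp [hm.act_one, Algebra.algebraMap_eq_smul_one])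
    (fun a b => conv_ext fun h => by
      obtain ⟨n, h1, h2, r⟩ := exists_rep2 k h
      rw [conv_rep2 _ _ r]
      simpa using hm.act_mul h a b h1 h2 r)

@[simp] lemma orb_apply (hm : Measuring k H B act) (b : B) (x : H) : orb hm b x = act x b := rfl

variable (k H B) in
/-- Right translation `(h f)(x) = f(xh)` on `Hom(H, B)`. -/
def tr : H →ₐ[k] ConvEnd k H B :=
  AlgHom.ofLinearMap
    { toFun := fun h =>
        { toFun := fun f => toConv (f.ofConv ∘ₗ LinearMap.mulRight k h)
          map_add' := fun _ _ => rfl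
          map_smul' := fun _ _ => rfl }
      map_add' := fun a b => LinearMap.ext fun f => conv_ext fun x =>
        (congrArg f.ofConv (mul_add x a b)).trans (map_add f.ofConv _ _)
      map_smul' := fun a b => LinearMap.ext fun f => conv_ext fun x =>
        (congrArg f.ofConv (mul_smul_comm a x b)).trans (map_smul f.ofConv _ _) }
    (LinearMap.ext fun f => conv_ext fun x => by simp)
    (fun a b => LinearMap.ext fun f => conv_ext fun x =>
      congrArg f.ofConv (mul_assoc x a b).symm)

@[simp] lemma tr_apply (h : H) (f : ConvAlg k H B) (x : H) : (tr k H B h f) x = f (x * h) := rfl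

variable (k H B) in
/-- Left multiplication operators on `Hom(H, B)`. -/
abbrev lW : ConvAlg k H B →ₐ[k] ConvEnd k H B := Algebra.lmul k (ConvAlg k H B)

lemma tr_orb (hm : Measuring k H B act)
    (hassoc : ∀ (h g : H) (b : B), act h (act g b) = act (h * g) b) (h : H) (b : B) :
    tr k H B h (orb hm b) = orb hm (act h b) :=
  conv_ext fun x => by simp [hassoc]

lemma tr_one (h : H) : tr k H B h 1 = counit (R := k) h • (1 : ConvAlg k H B) :=
  conv_ext fun x => by
    simp [Algebra.algebraMap_eq_smul_one, smul_smul, mul_comm]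

/-- Right translations are a measuring of `H` on `Hom(H, B)`. -/
lemma tr_mul {h : H} {n : ℕ} {h1 h2 : Fin n → H} (r : IsRep2 k H h h1 h2)
    (f g : ConvAlg k H B) :
    tr k H B h (f * g) = ∑ i, tr k H B (h1 i) f * tr k H B (h2 i) g := by
  refine conv_ext fun x => ?_
  obtain ⟨m, x1, x2, s⟩ := exists_rep2 k x
  have e := congrArg (fun F => F x h) (map_mul mulConv f g)
  rw [conv₂_rep2 _ _ s r, Finset.sum_comm] at e
  rw [tr_apply, ofConv_sum, LinearMap.sum_apply]
  refine e.trans (Finset.sum_congr rfl fun i _ => ?_)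
  rw [conv_rep2 _ _ s]
  rfl

lemma tr_mul_lW {h : H} {n : ℕ} {h1 h2 : Fin n → H} (r : IsRep2 k H h h1 h2)
    (f : ConvAlg k H B) :
    tr k H B h * lW k H B f = ∑ i, lW k H B (tr k H B (h1 i) f) * tr k H B (h2 i) := by
  refine LinearMap.ext fun g => ?_
  simpa using tr_mul r f g

/-- A bilinear map `τ : H × H → B` as the map `h ↦ τ(·, h)` from `H` to `Hom(H, B)`. -/
def flipConv (τ : H →ₗ[k] H →ₗ[k] B) : WithConv (H →ₗ[k] ConvAlg k H B) :=
  toConv ((WithConv.linearEquiv k (H →ₗ[k] B)).symm.toLinearMap ∘ₗ τ.flip)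

@[simp] lemma flipConv_apply (τ : H →ₗ[k] H →ₗ[k] B) (h x : H) : flipConv τ h x = τ x h := rfl

lemma flipConv_mul_inv (hcd : CocycleDatum k H B act σ σi) : flipConv σ * flipConv σi = 1 := by
  refine conv_ext₂ fun x y => ?_
  obtain ⟨n, x1, x2, r⟩ := exists_rep2 k x
  obtain ⟨m, y1, y2, s⟩ := exists_rep2 k y
  rw [conv₂_rep2 _ _ r s, Finset.sum_comm]
  refine (hcd.conv_left y x y1 y2 x1 x2 s r).trans ?_
  simp [Algebra.algebraMap_eq_smul_one, smul_smul, mul_comm]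

lemma flipConv_inv_mul (hcd : CocycleDatum k H B act σ σi) : flipConv σi * flipConv σ = 1 := by
  refine conv_ext₂ fun x y => ?_
  obtain ⟨n, x1, x2, r⟩ := exists_rep2 k x
  obtain ⟨m, y1, y2, s⟩ := exists_rep2 k y
  rw [conv₂_rep2 _ _ r s, Finset.sum_comm]
  refine (hcd.conv_right y x y1 y2 x1 x2 s r).trans ?_
  simp [Algebra.algebraMap_eq_smul_one, smul_smul, mul_comm]

/-- Multiplication by the orbit map of `b`. -/
def lamW (hm : Measuring k H B act) : B →ₐ[k] ConvEnd k H B := (lW k H B).comp (orb hm)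

lemma lamW_apply (hm : Measuring k H B act) (b : B) (f : ConvAlg k H B) :
    lamW hm b f = orb hm b * f := rfl

/-- Since `▷` is an action, the twisted associativity axiom says that `σ` commutes, for the
convolution product in two variables, with `(x, h) ↦ (xh) ▷ b`. -/
lemma flipConv_mul_orb (hcd : CocycleDatum k H B act σ σi)
    (hassoc : ∀ (h g : H) (b : B), act h (act g b) = act (h * g) b) (b : B) :
    flipConv σ * toConv ((orb hcd.toMeasuring).toLinearMap ∘ₗ act.flip b) =
      toConv ((orb hcd.toMeasuring).toLinearMap ∘ₗ act.flip b) * flipConv σ := by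
  have e : flipConv σ * toConv ((orb hcd.toMeasuring).toLinearMap ∘ₗ act.flip b) * flipConv σi =
      toConv ((orb hcd.toMeasuring).toLinearMap ∘ₗ act.flip b) := by
    refine conv_ext₂ fun x y => ?_
    obtain ⟨n, x1, x2, x3, r⟩ := exists_rep3 k x
    obtain ⟨m, y1, y2, y3, s⟩ := exists_rep3 k y
    rw [conv₂_rep3 _ _ _ r s, Finset.sum_comm]
    refine Eq.trans ?_ (hcd.act_act y x b y1 y2 y3 x1 x2 x3 s r).symm
    simp only [← hassoc]
    rfl
  conv_rhs => rw [← e, mul_assoc, flipConv_inv_mul hcd, mul_one]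

/-- The cocycle axiom, read as an identity in `Hom(H, B)`. -/
lemma flipConv_mul_tr (hcd : CocycleDatum k H B act σ σi) {n m : ℕ} {x y : H}
    {x1 x2 : Fin n → H} {y1 y2 : Fin m → H}
    (r : IsRep2 k H x x1 x2) (s : IsRep2 k H y y1 y2) :
    ∑ i, flipConv σ (x1 i) * tr k H B (x2 i) (flipConv σ y) =
      ∑ i, ∑ j, orb hcd.toMeasuring (σ (x1 i) (y1 j)) * flipConv σ (x2 i * y2 j) := by
  refine conv_ext fun z => ?_
  obtain ⟨p, z1, z2, u⟩ := exists_rep2 k z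
  simp only [ofConv_sum, LinearMap.sum_apply, conv_rep2 _ _ u]
  have := hcd.cocycle z x y z1 z2 x1 x2 y1 y2 u r s
  rw [Finset.sum_comm] at this
  conv at this => rhs; rw [Finset.sum_comm]
  refine this.symm.trans (Finset.sum_congr rfl fun i _ => ?_)
  rw [Finset.sum_comm]
  rfl

/-- The representation of `B #_σ H` on `Hom(H, B)`: here `j(h) f = σ(·, h₍₁₎) · (h₍₂₎ f)`. -/
def regRep (hcd : CocycleDatum k H B act σ σi)
    (hassoc : ∀ (h g : H) (b : B), act h (act g b) = act (h * g) b) :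
    CrossRep (ConvEnd k H B) act σ where
  t := tr k H B
  lam := lamW hcd.toMeasuring
  m := mapConv (lW k H B) (flipConv σ)
  mi := mapConv (lW k H B) (flipConv σi)
  q := ((tr k H B).toLinearMap.flip ∘ₗ (flipConv σ).ofConv).flip.compr₂ (lW k H B).toLinearMap
  m_one := by
    have e : flipConv σ 1 = 1 := conv_ext fun x => by
      simp [hcd.sigma_one, Algebra.algebraMap_eq_smul_one]
    rw [mapConv_apply, e, map_one]
  m_mul_mi := by rw [← map_mul, flipConv_mul_inv hcd, map_one]
  mi_mul_m := by rw [← map_mul, flipConv_inv_mul hcd, map_one]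
  cov b := by
    refine conv_ext fun h => ?_
    obtain ⟨n, h1, h2, r⟩ := exists_rep2 k h
    rw [mul_constConv_apply, conv_rep2 _ _ r]
    refine Eq.trans ?_ (tr_mul_lW r (orb hcd.toMeasuring b)).symm
    simp only [tr_orb hcd.toMeasuring hassoc]
    rfl
  comm b := by
    have := congrArg (mapConv (lW k H B)) (flipConv_mul_orb hcd hassoc b)
    rwa [map_mul, map_mul] at this
  t_mul_m x y x1 x2 r := tr_mul_lW r _
  m_mul_q x y x1 x2 y1 y2 r s := by
    have := congrArg (lW k H B) (flipConv_mul_tr hcd r s)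
    simp only [map_sum, map_mul] at this
    exact this

end Operators

/-! ### Evaluation of both sides -/

section Evaluation

open WithConv HopfAlgebra

variable {k : Type*} [Field k] {H : Type*} [Ring H] [HopfAlgebra k H]
variable {B : Type*} [Ring B] [Algebra k B]
variable {act : H →ₗ[k] B →ₗ[k] B} {σ σi : H →ₗ[k] H →ₗ[k] B}

lemma orb_mul_apply_one (hcd : CocycleDatum k H B act σ σi) (b : B) (f : ConvAlg k H B) :
    (orb hcd.toMeasuring b * f) 1 = b * f 1 := by
  have r : IsRep2 k H 1 (fun _ : Fin 1 => 1) (fun _ => 1) := by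
    simp [IsRep2, Algebra.TensorProduct.one_def]
  rw [conv_rep2 _ _ r]
  simp [hcd.one_act]

variable (hcd : CocycleDatum k H B act σ σi)
  (hassoc : ∀ (h g : H) (b : B), act h (act g b) = act (h * g) b)

lemma regRep_mul_t_one (f : WithConv (H →ₗ[k] ConvEnd k H B)) (h : H) :
    (f * (regRep hcd hassoc).tC) h (1 : ConvAlg k H B) = f h 1 := by
  obtain ⟨n, h1, h2, r⟩ := exists_rep2 k h
  rw [conv_rep2 _ _ r, LinearMap.sum_apply]
  refine Eq.trans (Finset.sum_congr rfl fun i _ => ?_)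
    (sum_counit_smul_right (LinearMap.applyₗ (1 : ConvAlg k H B) ∘ₗ f.ofConv) r)
  have : (f (h1 i) * (regRep hcd hassoc).tC (h2 i)) (1 : ConvAlg k H B) =
    f (h1 i) (tr k H B (h2 i) 1) := rfl
  rw [this, tr_one, map_smul]
  rfl

lemma regRep_j_one (h : H) : (regRep hcd hassoc).j h (1 : ConvAlg k H B) = flipConv σ h :=
  (regRep_mul_t_one hcd hassoc _ h).trans (mul_one (flipConv σ h))

/-- The operator `n(h)` commutes with multiplication by orbit maps, so it is determined on them by
its value at `1`, where it agrees with `j⁻¹(h)`. -/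
lemma regRep_nC_orb (b : B) (h : H) : (regRep hcd hassoc).nC h (orb hcd.toMeasuring b) =
    orb hcd.toMeasuring b * (regRep hcd hassoc).ji h 1 := by
  have := congrArg (fun f => f (1 : ConvAlg k H B)) ((regRep hcd hassoc).nC_mul_lam b h)
  have e1 : ((regRep hcd hassoc).nC h * (regRep hcd hassoc).lam b) (1 : ConvAlg k H B) =
    (regRep hcd hassoc).nC h (orb hcd.toMeasuring b * 1) := rfl
  have e2 : ((regRep hcd hassoc).lam b * (regRep hcd hassoc).nC h) (1 : ConvAlg k H B) =
    orb hcd.toMeasuring b * (regRep hcd hassoc).nC h 1 := rfl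
  rwa [e1, e2, mul_one, CrossRep.nC, regRep_mul_t_one] at this

lemma regRep_ji_one {h : H} {n : ℕ} {ha hb hc : Fin n → H} (r : IsRep3 k H h ha hb hc) :
    (regRep hcd hassoc).ji h (1 : ConvAlg k H B) =
      ∑ i, orb hcd.toMeasuring (σi (antipode k (hb i)) (hc i)) *
        flipConv σ (antipode k (ha i)) := by
  rw [(regRep hcd hassoc).ji_eq hcd r, LinearMap.sum_apply]
  refine Finset.sum_congr rfl fun i _ => ?_
  rw [← regRep_j_one hcd hassoc]
  rfl

lemma regRep_ji_apply (f : ConvAlg k H B) {g : H} {n : ℕ} {g1 g2 : Fin n → H}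
    (r : IsRep2 k H g g1 g2) :
    ((regRep hcd hassoc).ji g f) 1 = ∑ i, (flipConv σi (g2 i) * f) (antipode k (g1 i)) := by
  rw [CrossRep.ji, conv_rep2 _ _ r, LinearMap.sum_apply, ofConv_sum, LinearMap.sum_apply]
  refine Finset.sum_congr rfl fun i _ => ?_
  exact congrArg (flipConv σi (g2 i) * f).ofConv (one_mul _)

lemma regRep_ji_one_one (y : H) : ((regRep hcd hassoc).ji y (1 : ConvAlg k H B)) 1 =
    TensorProduct.lift (σi ∘ₗ antipode k) (comul (R := k) y) := by
  obtain ⟨n, y1, y2, r⟩ := exists_rep2 k y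
  rw [regRep_ji_apply hcd hassoc _ r, show comul (R := k) y = _ from r]
  simp

/-- Since `(j⁻¹(g) f)(1) = (σ⁻¹(·, g₍₂₎) f)(S g₍₁₎)`, a product `f = w₂ w₃` of two maps produces the
fourfold coproduct of `g`. -/
lemma regRep_ji_rep4 (w2 w3 : ConvAlg k H B) {g : H} {n : ℕ} {ga gb gc gd : Fin n → H}
    (r : IsRep4 k H g ga gb gc gd) :
    ((regRep hcd hassoc).ji g (w2 * w3)) 1 =
      ∑ j, σi (antipode k (gc j)) (gd j) * (w2 (antipode k (gb j)) * w3 (antipode k (ga j))) := by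
  let P : H ⊗[k] H →ₗ[k] B := LinearMap.mul' k B ∘ₗ
    TensorProduct.map (w2.ofConv ∘ₗ antipode k)
      (w3.ofConv ∘ₗ antipode k) ∘ₗ (TensorProduct.comm k H H).toLinearMap
  let ev : H →ₗ[k] ConvAlg k H B →ₗ[k] B :=
    (LinearMap.lcomp k B (antipode k) ∘ₗ
      (WithConv.linearEquiv k (H →ₗ[k] B)).toLinearMap).flip
  let N : (H ⊗[k] H) ⊗[k] H →ₗ[k] ConvAlg k H B →ₗ[k] B :=
    TensorProduct.lift ((LinearMap.llcomp k (ConvAlg k H B) B B).compl₁₂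
      ((LinearMap.mul k B).flip ∘ₗ P) ev)
  have hN : ∀ a b c w, N ((a ⊗ₜ b) ⊗ₜ c) w =
      w (antipode k c) * (w2 (antipode k b) * w3 (antipode k a)) := by
    intro a b c w
    simp [N, P, ev]
  have hN3 : ∀ u w, N (Δ3 k H u) w = (w * (w2 * w3)) (antipode k u) := by
    intro u w
    obtain ⟨m, a, b, c, s⟩ := exists_rep3 k u
    rw [← mul_assoc, conv_antipode_rep3 _ _ _ s, s, map_sum, LinearMap.sum_apply]
    simp only [hN, mul_assoc]
  obtain ⟨m, g1, g2, s⟩ := exists_rep2 k g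
  rw [regRep_ji_apply hcd hassoc _ s]
  have e := congrArg (TensorProduct.lift (N.compl₂ (flipConv σi).ofConv)) r
  rw [Δ4, LinearMap.comp_apply, show comul (R := k) g = _ from s] at e
  simpa [hN, hN3] using e

/-- The left-hand side of the identity is the value at `1` of a product of operators on
`Hom(H, B)` applied to the orbit map of `b'`. -/
lemma lhs_eq (b' c' : B) (h g : H) {n m : ℕ}
    {h1 h2 h3 h4 h5 h6 : Fin n → H} {g1 g2 g3 g4 g5 : Fin m → H}
    (r : IsRep6 k H h h1 h2 h3 h4 h5 h6) (s : IsRep5 k H g g1 g2 g3 g4 g5) :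
    ∑ i, ∑ j, act (antipode k (g3 j) * antipode k (h3 i))
        (σi (h4 i) (g4 j) * act (h5 i * g5 j) c' * act (h6 i) b')
          * σi (antipode k (g1 j) * antipode k (h1 i)) (h2 i * g2 j) =
      (((mulConv (regRep hcd hassoc).nC * mulConv (regRep hcd hassoc).tCi *
        (regRep hcd hassoc).lamConv σi * mulConv ((regRep hcd hassoc).lrho c') *
          fstConv (regRep hcd hassoc).tC) h g) (orb hcd.toMeasuring b')) 1 := by
  let Ψ : H ⊗[k] H →ₗ[k] H ⊗[k] H →ₗ[k] Module.End k B :=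
    TensorProduct.curry ((LinearMap.mul k B).flip ∘ₗ TensorProduct.lift σi ∘ₗ
      TensorProduct.map (antipode k ∘ₗ LinearMap.mul' k H) (LinearMap.mul' k H) ∘ₗ
      (TensorProduct.tensorTensorTensorComm k H H H H).toLinearMap)
  have hΨ : ∀ a b c d, Ψ (a ⊗ₜ b) (c ⊗ₜ d) =
      LinearMap.mulRight k (σi (antipode k (a * c)) (b * d)) := by
    intro a b c d
    refine LinearMap.ext fun z => ?_
    simp [Ψ]
  let f3 : WithConv (H →ₗ[k] WithConv (H →ₗ[k] Module.End k B)) :=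
    mulConv (toConv (act ∘ₗ antipode k))
  let f4 : WithConv (H →ₗ[k] WithConv (H →ₗ[k] Module.End k B)) :=
    biConv (σi.compr₂ (Algebra.lmul k B).toLinearMap)
  let f5 : WithConv (H →ₗ[k] WithConv (H →ₗ[k] Module.End k B)) :=
    mulConv (toConv ((Algebra.lmul k B).toLinearMap ∘ₗ act.flip c'))
  let f6 : WithConv (H →ₗ[k] Module.End k B) := toConv act
  have key := congrArg (fun f => f b') (conv₂_rep65 Ψ f3 f4 f5 f6 r s)
  let ι : B →ₗ[k] ConvAlg k H B := (orb hcd.toMeasuring).toLinearMap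
  let Q : ConvAlg k H B →ₗ[k] B :=
    LinearMap.applyₗ (1 : H) ∘ₗ (WithConv.linearEquiv k (H →ₗ[k] B)).toLinearMap
  -- Each factor on `B` corresponds under `b ↦ orb b` to an operator on `Hom(H, B)`; for the
  -- outermost one this holds only after evaluation at `1`.
  have i1 : ∀ x y v, (LinearMap.id : B →ₗ[k] B) (AlgHom.id k (Module.End k B)
      ((toConv (((WithConv.linearEquiv k (H →ₗ[k] Module.End k B)).symm.toLinearMap ∘ₗ
        LinearMap.lcomp k (Module.End k B) comul ∘ₗ Ψ) ∘ₗ comul) :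
          WithConv (H →ₗ[k] WithConv (H →ₗ[k] Module.End k B))) x y) v) =
      Q (AlgHom.id k (ConvEnd k H B) (mulConv (regRep hcd hassoc).nC x y) (ι v)) := by
    intro x y v
    obtain ⟨p, x1, x2, u⟩ := exists_rep2 k x
    obtain ⟨q, y1, y2, w⟩ := exists_rep2 k y
    have e1 : Ψ (comul x) (comul y) v =
        v * TensorProduct.lift (σi ∘ₗ antipode k) (comul (R := k) (x * y)) := by
      rw [u.mul w, show comul (R := k) x = _ from u, show comul (R := k) y = _ from w]
      simp [hΨ, Finset.mul_sum]
      exact Finset.sum_comm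
    refine Eq.trans e1 ?_
    rw [← regRep_ji_one_one hcd hassoc, ← orb_mul_apply_one hcd, ← regRep_nC_orb hcd hassoc]
    rfl
  have i3 : ∀ x y v, ι (AlgHom.id k (Module.End k B) (f3 x y) v) =
      AlgHom.id k (ConvEnd k H B) (mulConv (regRep hcd hassoc).tCi x y) (ι v) :=
    fun x y v => (tr_orb hcd.toMeasuring hassoc (antipode k (x * y)) v).symm
  have i4 : ∀ x y v, ι (AlgHom.id k (Module.End k B) (f4 x y) v) =
      AlgHom.id k (ConvEnd k H B) ((regRep hcd hassoc).lamConv σi x y) (ι v) :=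
    fun x y v => map_mul (orb hcd.toMeasuring) (σi x y) v
  have i5 : ∀ x y v, ι (AlgHom.id k (Module.End k B) (f5 x y) v) =
      AlgHom.id k (ConvEnd k H B) (mulConv ((regRep hcd hassoc).lrho c') x y) (ι v) :=
    fun x y v => map_mul (orb hcd.toMeasuring) (act (x * y) c') v
  have i6 : ∀ x y v, ι (AlgHom.id k (Module.End k B) (fstConv f6 x y) v) =
      AlgHom.id k (ConvEnd k H B) (fstConv (regRep hcd hassoc).tC x y) (ι v) := by
    intro x y v
    exact (map_smul ι (counit (R := k) y) (act x v)).trans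
      (congrArg (counit (R := k) y • ·) (tr_orb hcd.toMeasuring hassoc x v).symm)
  have fin := intertwine_mul _ _ ι LinearMap.id Q (intertwine_mul _ _ ι LinearMap.id Q
    (intertwine_mul _ _ ι LinearMap.id Q (intertwine_mul _ _ ι LinearMap.id Q i1 i3) i4) i5) i6
    h g b'
  refine Eq.trans ?_ (key.symm.trans fin)
  simp only [LinearMap.sum_apply]
  refine Finset.sum_congr rfl fun i _ => Finset.sum_congr rfl fun j _ => ?_
  simp [hΨ, f3, f4, f5, f6, HopfAlgebra.antipode_mul_antidistrib, mul_assoc]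

/-- The right-hand side of the identity, read off from the collapsed product of operators. -/
lemma rhs_eq (b' c' : B) (h g : H) {n m : ℕ} {ha hb hc : Fin n → H} {ga gb gc gd : Fin m → H}
    (r : IsRep3 k H h ha hb hc) (s : IsRep4 k H g ga gb gc gd) :
    (((regRep hcd hassoc).lam c' * (regRep hcd hassoc).ji g * (regRep hcd hassoc).nC h)
      (orb hcd.toMeasuring b')) 1 =
      ∑ i, ∑ j, c' * σi (antipode k (gc j)) (gd j)
        * act (antipode k (gb j)) (b' * σi (antipode k (hb i)) (hc i))
        * σ (antipode k (ga j)) (antipode k (ha i)) := by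
  have e : ((regRep hcd hassoc).lam c' * (regRep hcd hassoc).ji g * (regRep hcd hassoc).nC h)
      (orb hcd.toMeasuring b') = orb hcd.toMeasuring c' *
        (regRep hcd hassoc).ji g ((regRep hcd hassoc).nC h (orb hcd.toMeasuring b')) := rfl
  rw [e, orb_mul_apply_one hcd, regRep_nC_orb, regRep_ji_one hcd hassoc r, Finset.mul_sum, map_sum,
    ofConv_sum, LinearMap.sum_apply, Finset.mul_sum]
  refine Finset.sum_congr rfl fun i _ => ?_
  rw [← mul_assoc, ← map_mul, regRep_ji_rep4 hcd hassoc _ _ s, Finset.mul_sum]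
  refine Finset.sum_congr rfl fun j _ => ?_
  simp only [← mul_assoc]
  rfl

end Evaluation

section Statements

variable {k : Type*} [Field k]
variable {H : Type*} [Ring H] [HopfAlgebra k H]
variable {B : Type*} [Ring B] [Algebra k B]

local notation "𝑺" => HopfAlgebra.antipode (R := k)

/-- The key identity in Theorem 3.12 showing that `φ : (B^e # H)^{σ̃} → B^e #_σ H` is an
algebra isomorphism. -/
theorem statement16 (act : H →ₗ[k] B →ₗ[k] B) (σ σi : H →ₗ[k] H →ₗ[k] B)
    (hcd : CocycleDatum k H B act σ σi)
    (hassoc : ∀ (h g : H) (b : B), act h (act g b) = act (h * g) b) :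
    ∀ (b' c' : B) (h g : H) {n n' m m' : ℕ}
      (h1 h2 h3 h4 h5 h6 : Fin n → H) (g1 g2 g3 g4 g5 : Fin m → H)
      (ha hb hc : Fin n' → H) (ga gb gc gd : Fin m' → H),
      IsRep6 k H h h1 h2 h3 h4 h5 h6 → IsRep5 k H g g1 g2 g3 g4 g5 →
      IsRep3 k H h ha hb hc → IsRep4 k H g ga gb gc gd →
      -- (S(g₍₃₎)S(h₍₃₎))▷(σ⁻¹(h₍₄₎,g₍₄₎)((h₍₅₎g₍₅₎)▷c')(h₍₆₎▷b'))·σ⁻¹(S(g₍₁₎)S(h₍₁₎),h₍₂₎g₍₂₎)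
      ∑ i, ∑ j, act (𝑺 (g3 j) * 𝑺 (h3 i))
            (σi (h4 i) (g4 j) * act (h5 i * g5 j) c' * act (h6 i) b')
          * σi (𝑺 (g1 j) * 𝑺 (h1 i)) (h2 i * g2 j)
      -- = c'·σ⁻¹(S(g₍₃₎),g₍₄₎)·(S(g₍₂₎)▷(b'·σ⁻¹(S(h₍₂₎),h₍₃₎)))·σ(S(g₍₁₎),S(h₍₁₎))
      = ∑ i, ∑ j, c' * σi (𝑺 (gc j)) (gd j)
          * act (𝑺 (gb j)) (b' * σi (𝑺 (hb i)) (hc i))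
          * σ (𝑺 (ga j)) (𝑺 (ha i)) := by
  intro b' c' h g n n' m m' h1 h2 h3 h4 h5 h6 g1 g2 g3 g4 g5 ha hb hc ga gb gc gd r6 r5 r3 r4
  rw [lhs_eq hcd hassoc b' c' h g r6 r5, (regRep hcd hassoc).chain hcd c' h g,
    rhs_eq hcd hassoc b' c' h g r3 r4]

end Statements
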